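/- arXiv:1209.0917 — 2 statements merged into one kernel-verified Lean document; each statement's English description precedes it below -/
import Mathlib

section
/- Let μ : (0, +∞) → ℝ be lower semicontinuous, and suppose that for every k > 0 there exists δ_k > 0 such that μ(k + δ) ≤ μ(k) for all δ ∈ [0, δ_k]. Then μ is non-increasing on (0, +∞): for all 0 < k₁ ≤ k₂, μ(k₂) ≤ μ(k₁). -/
open MeasureTheory Set Pointwise

noncomputable section

/-- The Euclidean norm on `ℝ × ℝ`. -/
def enorm2 (v : ℝ × ℝ) : ℝ := Real.sqrt (v.1 ^ 2 + v.2 ^ 2)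

/-- The Euclidean scalar product on `ℝ × ℝ`. -/
def inner2 (v w : ℝ × ℝ) : ℝ := v.1 * w.1 + v.2 * w.2

/-- The polar function `H°(v) = sup_{ξ ≠ 0} ⟨ξ, v⟩ / H(ξ)`. -/
def polar (H : ℝ × ℝ → ℝ) (v : ℝ × ℝ) : ℝ :=
  sSup {r : ℝ | ∃ ξ : ℝ × ℝ, ξ ≠ 0 ∧ r = inner2 ξ v / H ξ}

/-- The divergence of a vector field on `ℝ × ℝ`. -/
def divg (σ : ℝ × ℝ → ℝ × ℝ) (x : ℝ × ℝ) : ℝ :=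
  (fderiv ℝ σ x (1, 0)).1 + (fderiv ℝ σ x (0, 1)).2

/-- The relative perimeter of `F` in `Ω` with constraint `N (σ x) ≤ 1` on the
vector fields; `N = polar H` gives the anisotropic perimeter `P_H`, `N = enorm2`
gives the Euclidean perimeter `P`. -/
def perim (N : ℝ × ℝ → ℝ) (F Ω : Set (ℝ × ℝ)) : ℝ :=
  sSup {p : ℝ | ∃ σ : ℝ × ℝ → ℝ × ℝ, ContDiff ℝ 1 σ ∧ HasCompactSupport σ ∧
    tsupport σ ⊆ Ω ∧ (∀ x, N (σ x) ≤ 1) ∧ p = ∫ x in F, divg σ x}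

/-- The anisotropic relative perimeter `P_H(F; Ω)`. -/
def perH (H : ℝ × ℝ → ℝ) (F Ω : Set (ℝ × ℝ)) : ℝ := perim (polar H) F Ω

/-- The Euclidean relative perimeter `P(F; Ω)`. -/
def perE (F Ω : Set (ℝ × ℝ)) : ℝ := perim enorm2 F Ω

/-- The Wulff shape `W = {ξ : H°(ξ) < 1}`. -/
def wulff (H : ℝ × ℝ → ℝ) : Set (ℝ × ℝ) := {ξ | polar H ξ < 1}

/-- The standing assumptions on the anisotropy `H`: nonnegative, `C²` away from the
origin, `H²` strictly convex, positively `1`-homogeneous (absolutely), and comparable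
to the Euclidean norm with constants `0 < α ≤ β`. -/
structure IsAnisoNorm (H : ℝ × ℝ → ℝ) (α β : ℝ) : Prop where
  nonneg : ∀ v, 0 ≤ H v
  smooth : ContDiffOn ℝ 2 H {(0 : ℝ × ℝ)}ᶜ
  sq_strictConvex : StrictConvexOn ℝ Set.univ (fun v => H v ^ 2)
  homog : ∀ (t : ℝ) (ξ : ℝ × ℝ), H (t • ξ) = |t| * H ξ
  alpha_pos : 0 < α
  alpha_le_beta : α ≤ β
  lower : ∀ ξ, α * enorm2 ξ ≤ H ξ
  upper : ∀ ξ, H ξ ≤ β * enorm2 ξ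

/-- A rigid motion of the plane: an affine bijection whose linear part preserves
the Euclidean norm. -/
def IsRigidMotion (e : ℝ × ℝ → ℝ × ℝ) : Prop :=
  ∃ (A : (ℝ × ℝ) →ₗ[ℝ] (ℝ × ℝ)) (b : ℝ × ℝ),
    (∀ x, e x = A x + b) ∧ Function.Bijective A ∧ ∀ x, enorm2 (A x) = enorm2 x

/-- `Ω` has Lipschitz boundary: near each boundary point, in suitable coordinates,
the boundary is the graph of a Lipschitz function with the set lying on one side. -/
def HasLipschitzBoundary (Ω : Set (ℝ × ℝ)) : Prop :=
  ∀ p ∈ frontier Ω, ∃ (e : ℝ × ℝ → ℝ × ℝ) (f : ℝ → ℝ) (L : NNReal) (U : Set (ℝ × ℝ)),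
    IsRigidMotion e ∧ LipschitzWith L f ∧ IsOpen U ∧ p ∈ U ∧
    Ω ∩ U = {x ∈ U | (e x).2 < f (e x).1}

/-- The best constant `C_H(Ω)` in the anisotropic relative isoperimetric inequality. -/
def CH (H : ℝ × ℝ → ℝ) (Ω : Set (ℝ × ℝ)) : ℝ :=
  sInf {c : ℝ | ∃ E : Set (ℝ × ℝ), E ⊆ Ω ∧ MeasurableSet E ∧ 0 < (volume E).toReal ∧
    (volume E).toReal ≤ (volume Ω).toReal / 2 ∧ c = perH H E Ω ^ 2 / (volume E).toReal}

/-- The "gradient" `∇H` of `H : ℝ × ℝ → ℝ`. -/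
def gradH (H : ℝ × ℝ → ℝ) (v : ℝ × ℝ) : ℝ × ℝ :=
  (fderiv ℝ H v (1, 0), fderiv ℝ H v (0, 1))

end
/-- a lower semicontinuous function on `(0, +∞)` which does not increase
under small increments of its argument is non-increasing. -/
theorem stmt5 (μ : ℝ → ℝ) (hlsc : LowerSemicontinuousOn μ (Set.Ioi 0))
    (hstep : ∀ k : ℝ, 0 < k → ∃ δk : ℝ, 0 < δk ∧ ∀ δ ∈ Set.Icc 0 δk, μ (k + δ) ≤ μ k) :
    ∀ k₁ k₂ : ℝ, 0 < k₁ → k₁ ≤ k₂ → μ k₂ ≤ μ k₁ := by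
  intro a b ha hab
  -- The sublevel set `{μ ≤ μ a}` is closed in `[a, b]` by lower semicontinuity, contains `a`, and
  -- by `hstep` contains points just to the right of each of its points: it is all of `[a, b]`.
  have hsub : Icc a b ⊆ Ioi 0 := fun x hx => lt_of_lt_of_le ha hx.1
  have hclosed : IsClosed ({x | μ x ≤ μ a} ∩ Icc a b) := by
    obtain ⟨v, hv, hv'⟩ := lowerSemicontinuousOn_iff_preimage_Iic.1 (hlsc.mono hsub) (μ a)
    have h : {x | μ x ≤ μ a} ∩ Icc a b = Icc a b ∩ v := by
      rw [← hv', inter_comm]; rfl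
    rw [h]
    exact isClosed_Icc.inter hv
  refine hclosed.Icc_subset_of_forall_exists_gt (le_refl (μ a)) ?_ (right_mem_Icc.2 hab)
  rintro x ⟨hx, hxab⟩ y (hy : x < y)
  obtain ⟨d, hd, hstep_x⟩ := hstep x (lt_of_lt_of_le ha hxab.1)
  have hmin : 0 < min d (y - x) := lt_min hd (sub_pos.2 hy)
  refine ⟨x + min d (y - x), (hstep_x _ ⟨hmin.le, min_le_left _ _⟩).trans hx, by linarith, ?_⟩
  linarith [min_le_right d (y - x)]
end

section
/- Let A ⊆ ℝ² be a nonempty open convex cone with vertex at the origin (t·A = A for all t > 0). Then for every γ > 0, the anisotropic perimeter of the rescaled Wulff shape relative to A satisfies P_H(γ·W; A) = 2γ |W ∩ A|. -/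
/-!
The polar function `p = H°` is a norm on the plane and `γW = {p < γ}`, so the claim is a statement
about the balls of a norm. By scaling, the sector `{p < r} ∩ A` has area `r² |W ∩ A|`, because `A`
is a cone (`volume_sector`).

*Upper bound.* The indicator of `{p < γ}` is the limit of the Lipschitz ramps
`g = min 1 ((γ - p) / ε)⁺`. For a competitor `σ`, integration by parts gives
`∫ g div σ = -∫ Dg(σ)`, and Rademacher's theorem makes the right-hand side meaningful. Since `g` is
`1 / ε`-Lipschitz for `p` and locally constant off the shell `γ - ε ≤ p ≤ γ`, while `p (σ) ≤ 1` and
`σ` lives in `A`, this is at most the area of the shell in `A` divided by `ε`, which tends to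
`2γ |W ∩ A|` (`integral_ramp_mul_divg_le`, `setIntegral_divg_le`).

*Lower bound.* For a cutoff `0 ≤ η ≤ 1` with compact support in `A` and `t > 0`, the radial field
`x ↦ η (t x) x` is supported in the cone and has `p`-norm at most `γ` on `{p < γ}`, so its flux is at
most `γ P` with `P` the perimeter (`flux_radial_le`). Up to the factor `t` this flux is the derivative
of `t² ∫ η (t x)` over `{p < γ}`; integrating from `0` to `1` yields `∫ η ≤ γ P / 2`
(`setIntegral_cutoff_le`). Letting `η` increase to the indicator of `A` gives
`γ² |W ∩ A| ≤ γ P / 2` (`area_le`). Averaging over dilations in this way replaces the construction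
of cutoffs that are homogeneous of degree zero.
-/

open MeasureTheory Set Pointwise

/-! ### The polar function is a norm -/

section Polar

variable {H : ℝ × ℝ → ℝ} {α β : ℝ}

theorem inner2_le (v w : ℝ × ℝ) : inner2 v w ≤ enorm2 v * enorm2 w := by
  unfold inner2 enorm2
  rw [← Real.sqrt_mul (by positivity)]
  exact (le_abs_self _).trans (Real.abs_le_sqrt (by nlinarith [sq_nonneg (v.1 * w.2 - v.2 * w.1)]))

theorem enorm2_pos {v : ℝ × ℝ} (hv : v ≠ 0) : 0 < enorm2 v := by
  refine Real.sqrt_pos.2 ?_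
  by_contra! h
  exact hv (Prod.ext (by simp; nlinarith [sq_nonneg v.1, sq_nonneg v.2])
    (by simp; nlinarith [sq_nonneg v.1, sq_nonneg v.2]))

theorem IsAnisoNorm.pos (hH : IsAnisoNorm H α β) {v : ℝ × ℝ} (hv : v ≠ 0) : 0 < H v :=
  (mul_pos hH.alpha_pos (enorm2_pos hv)).trans_le (hH.lower v)

theorem inner2_div_le (hH : IsAnisoNorm H α β) {ξ : ℝ × ℝ} (hξ : ξ ≠ 0) (v : ℝ × ℝ) :
    inner2 ξ v / H ξ ≤ enorm2 v / α := by
  rw [div_le_div_iff₀ (hH.pos hξ) hH.alpha_pos]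
  calc inner2 ξ v * α ≤ enorm2 ξ * enorm2 v * α :=
        mul_le_mul_of_nonneg_right (inner2_le _ _) hH.alpha_pos.le
    _ = enorm2 v * (α * enorm2 ξ) := by ring
    _ ≤ enorm2 v * H ξ := mul_le_mul_of_nonneg_left (hH.lower ξ) (Real.sqrt_nonneg _)

theorem le_polar (hH : IsAnisoNorm H α β) {ξ : ℝ × ℝ} (hξ : ξ ≠ 0) (v : ℝ × ℝ) :
    inner2 ξ v / H ξ ≤ polar H v := by
  refine le_csSup ⟨enorm2 v / α, ?_⟩ ⟨ξ, hξ, rfl⟩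
  rintro r ⟨η, hη, rfl⟩
  exact inner2_div_le hH hη v

theorem polar_le {v : ℝ × ℝ} {b : ℝ} (h : ∀ ξ : ℝ × ℝ, ξ ≠ 0 → inner2 ξ v / H ξ ≤ b) :
    polar H v ≤ b := by
  refine csSup_le ⟨_, (1, 0), by simp, rfl⟩ ?_
  rintro r ⟨η, hη, rfl⟩
  exact h η hη

/-- The polar function is a seminorm. It is a supremum of linear forms over a family
symmetric about the origin. -/
noncomputable def polarSeminorm (hH : IsAnisoNorm H α β) : Seminorm ℝ (ℝ × ℝ) :=
  Seminorm.ofSMulLE (polar H)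
    (by
      have h (ξ : ℝ × ℝ) : inner2 ξ 0 / H ξ = 0 := by simp [inner2]
      exact le_antisymm (polar_le fun ξ _ => (h ξ).le)
        ((h (1, 0)).symm.le.trans (le_polar hH (by simp) 0)))
    (fun v w => polar_le fun ξ hξ => by
      have : inner2 ξ (v + w) / H ξ = inner2 ξ v / H ξ + inner2 ξ w / H ξ := by
        simp only [inner2, Prod.fst_add, Prod.snd_add]; ring
      rw [this]
      exact add_le_add (le_polar hH hξ v) (le_polar hH hξ w))
    (fun t v => polar_le fun ξ hξ => by
      rw [Real.norm_eq_abs]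
      rcases le_total 0 t with ht | ht
      · have : inner2 ξ (t • v) / H ξ = |t| * (inner2 ξ v / H ξ) := by
          simp only [inner2, Prod.smul_fst, Prod.smul_snd, smul_eq_mul, abs_of_nonneg ht]; ring
        rw [this]
        exact mul_le_mul_of_nonneg_left (le_polar hH hξ v) (abs_nonneg t)
      · have hs : H (-ξ) = H ξ := by simpa using hH.homog (-1) ξ
        have : inner2 ξ (t • v) / H ξ = |t| * (inner2 (-ξ) v / H (-ξ)) := by
          simp only [inner2, Prod.smul_fst, Prod.smul_snd, smul_eq_mul, abs_of_nonpos ht, hs,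
            Prod.fst_neg, Prod.snd_neg]; ring
        rw [this]
        exact mul_le_mul_of_nonneg_left (le_polar hH (neg_ne_zero.2 hξ) v) (abs_nonneg t))

theorem coe_polarSeminorm (hH : IsAnisoNorm H α β) : ⇑(polarSeminorm hH) = polar H := rfl

theorem norm_le_enorm2 (v : ℝ × ℝ) : ‖v‖ ≤ enorm2 v := by
  rw [Prod.norm_def, Real.norm_eq_abs, Real.norm_eq_abs]
  exact max_le (Real.abs_le_sqrt (by nlinarith [sq_nonneg v.2]))
    (Real.abs_le_sqrt (by nlinarith [sq_nonneg v.1]))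

theorem enorm2_le_norm (v : ℝ × ℝ) : enorm2 v ≤ 2 * ‖v‖ := by
  have h1 : v.1 ^ 2 ≤ ‖v‖ ^ 2 := sq_le_sq.2 (by simpa using norm_fst_le v)
  have h2 : v.2 ^ 2 ≤ ‖v‖ ^ 2 := sq_le_sq.2 (by simpa using norm_snd_le v)
  exact Real.sqrt_le_iff.2 ⟨by positivity, by nlinarith⟩

theorem polar_upper (hH : IsAnisoNorm H α β) (v : ℝ × ℝ) : polar H v ≤ 2 / α * ‖v‖ := by
  refine (polar_le fun ξ hξ => inner2_div_le hH hξ v).trans ?_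
  rw [div_mul_eq_mul_div]
  exact div_le_div_of_nonneg_right (enorm2_le_norm v) hH.alpha_pos.le

theorem polar_lower (hH : IsAnisoNorm H α β) (v : ℝ × ℝ) : 1 / β * ‖v‖ ≤ polar H v := by
  have hβ : 0 < β := hH.alpha_pos.trans_le hH.alpha_le_beta
  rcases eq_or_ne v 0 with rfl | hv
  · rw [norm_zero, mul_zero]
    exact apply_nonneg (polarSeminorm hH) (0 : ℝ × ℝ)
  refine le_trans ?_ (le_polar hH hv v)
  have h1 : inner2 v v = enorm2 v * enorm2 v := by
    unfold inner2 enorm2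
    rw [Real.mul_self_sqrt (by positivity)]; ring
  rw [le_div_iff₀ (hH.pos hv), h1]
  calc 1 / β * ‖v‖ * H v ≤ 1 / β * enorm2 v * (β * enorm2 v) := by
        have := norm_le_enorm2 v
        have := hH.upper v
        have := hH.nonneg v
        have : 0 ≤ enorm2 v := Real.sqrt_nonneg _
        gcongr
    _ = enorm2 v * enorm2 v := by field_simp

end Polar

/-! ### The upper bound: integration by parts against a Lipschitz ramp -/

section Cone

variable {p : Seminorm ℝ (ℝ × ℝ)} {c C : ℝ} {A : Set (ℝ × ℝ)}

theorem lipschitz_of_bound (hC : ∀ x, p x ≤ C * ‖x‖) : LipschitzWith C.toNNReal p := by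
  refine LipschitzWith.of_dist_le_mul fun x y => ?_
  rw [Real.dist_eq, dist_eq_norm]
  refine (abs_sub_map_le_sub p x y).trans ((hC _).trans ?_)
  exact mul_le_mul_of_nonneg_right (Real.le_coe_toNNReal C) (norm_nonneg _)

theorem isOpen_sublevel (hp : Continuous p) (r : ℝ) : IsOpen {x | p x < r} :=
  isOpen_lt hp continuous_const

theorem sublevel_subset_ball (hc : 0 < c) (hcp : ∀ x, c * ‖x‖ ≤ p x) (r : ℝ) :
    {x | p x < r} ⊆ Metric.ball 0 (r / c) := by
  intro x hx
  rw [mem_ball_zero_iff, lt_div_iff₀ hc, mul_comm]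
  exact (hcp x).trans_lt hx

theorem measure_sublevel_lt_top (hc : 0 < c) (hcp : ∀ x, c * ‖x‖ ≤ p x) (r : ℝ) :
    volume {x | p x < r} < ⊤ :=
  (measure_mono (sublevel_subset_ball hc hcp r)).trans_lt measure_ball_lt_top

theorem smul_sublevel {r : ℝ} (hr : 0 < r) (s : ℝ) :
    r • {x : ℝ × ℝ | p x < s} = {x | p x < r * s} := by
  ext x
  rw [mem_smul_set_iff_inv_smul_mem₀ hr.ne', mem_ofPred_eq, mem_ofPred_eq, map_smul_eq_mul,
    Real.norm_eq_abs, abs_of_pos (inv_pos.2 hr), inv_mul_lt_iff₀ hr]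

/-- The area of a sector of radius `r` scales like `r ^ 2`. -/
theorem volume_sector (hcone : ∀ t : ℝ, 0 < t → t • A = A) {r : ℝ} (hr : 0 < r) :
    volume.real ({x | p x < r} ∩ A) = r ^ 2 * volume.real ({x | p x < 1} ∩ A) := by
  have h : {x | p x < r} ∩ A = r • ({x | p x < 1} ∩ A) := by
    rw [smul_set_inter₀ hr.ne', smul_sublevel hr, mul_one, hcone r hr]
  rw [h, measureReal_def, Measure.addHaar_smul, ENNReal.toReal_mul, ← measureReal_def,
    ENNReal.toReal_ofReal (abs_nonneg _), Module.finrank_prod, Module.finrank_self,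
    abs_of_nonneg (by positivity)]

/-- The truncated profile `min 1 ((γ - p x) / ε)⁺`: it equals `1` on `{p ≤ γ - ε}`, vanishes on
`{p ≥ γ}`, and increases to the indicator of `{p < γ}` as `ε → 0`. -/
noncomputable def ramp (p : Seminorm ℝ (ℝ × ℝ)) (γ ε : ℝ) (x : ℝ × ℝ) : ℝ :=
  max 0 (min 1 ((γ - p x) / ε))

theorem ramp_mem (γ ε : ℝ) (x : ℝ × ℝ) : 0 ≤ ramp p γ ε x ∧ ramp p γ ε x ≤ 1 :=
  ⟨le_max_left _ _, max_le zero_le_one (min_le_left _ _)⟩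

theorem abs_ramp_sub_le {γ ε : ℝ} (hε : 0 < ε) (x y : ℝ × ℝ) :
    |ramp p γ ε x - ramp p γ ε y| ≤ p (x - y) / ε := by
  unfold ramp
  refine (abs_max_sub_max_le_max _ _ _ _).trans ?_
  refine max_le (by rw [sub_self, abs_zero]; positivity) ?_
  refine (abs_min_sub_min_le_max _ _ _ _).trans ?_
  refine max_le (by rw [sub_self, abs_zero]; positivity) ?_
  rw [← sub_div, abs_div, abs_of_pos hε]
  refine div_le_div_of_nonneg_right ?_ hε.le
  rw [sub_sub_sub_cancel_left, abs_sub_comm]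
  exact abs_sub_map_le_sub p x y

theorem ramp_lipschitz (hC : ∀ x, p x ≤ C * ‖x‖) {γ ε : ℝ} (hε : 0 < ε) :
    ∃ K, LipschitzWith K (ramp p γ ε) := by
  refine ⟨(C / ε).toNNReal, LipschitzWith.of_dist_le_mul fun x y => ?_⟩
  rw [Real.dist_eq, dist_eq_norm]
  refine (abs_ramp_sub_le hε x y).trans ?_
  calc p (x - y) / ε ≤ C * ‖x - y‖ / ε := div_le_div_of_nonneg_right (hC _) hε.le
    _ = C / ε * ‖x - y‖ := by ring
    _ ≤ _ := mul_le_mul_of_nonneg_right (Real.le_coe_toNNReal _) (norm_nonneg _)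

/-- The derivative of the ramp is bounded in the dual norm by `1 / ε`, and lives on the shell
`γ - ε ≤ p ≤ γ`. -/
theorem neg_fderiv_ramp_le (hp : Continuous p) {γ ε : ℝ} (hε : 0 < ε) {x v : ℝ × ℝ}
    (hd : DifferentiableAt ℝ (ramp p γ ε) x) (hv : p v ≤ 1) :
    -(fderiv ℝ (ramp p γ ε) x v) ≤ {x | γ - ε ≤ p x ∧ p x ≤ γ}.indicator (fun _ => 1 / ε) x := by
  by_cases hx : γ - ε ≤ p x ∧ p x ≤ γ
  · rw [indicator_of_mem (by exact hx)]
    refine (neg_le_abs _).trans ?_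
    have h := (hd.hasFDerivAt.hasLineDerivAt v).tendsto_slope_zero_right.abs
    refine le_of_tendsto h ?_
    filter_upwards [self_mem_nhdsWithin] with t (ht : 0 < t)
    rw [smul_eq_mul, abs_mul, abs_of_pos (inv_pos.2 ht), inv_mul_le_iff₀ ht]
    refine (abs_ramp_sub_le hε _ _).trans ?_
    rw [add_sub_cancel_left, map_smul_eq_mul, Real.norm_eq_abs, abs_of_pos ht, mul_one_div]
    exact div_le_div_of_nonneg_right (mul_le_of_le_one_right ht.le hv) hε.le
  · rw [indicator_of_notMem (by exact hx)]
    have : ∃ k : ℝ, ramp p γ ε =ᶠ[nhds x] fun _ => k := by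
      rw [not_and_or, not_le, not_le] at hx
      rcases hx with hx | hx
      · refine ⟨1, ?_⟩
        filter_upwards [(isOpen_lt hp continuous_const).mem_nhds hx] with y (hy : p y < γ - ε)
        have : 1 ≤ (γ - p y) / ε := by rw [le_div_iff₀ hε]; linarith
        simp [ramp, this]
      · refine ⟨0, ?_⟩
        filter_upwards [(isOpen_lt continuous_const hp).mem_nhds hx] with y (hy : γ < p y)
        have : (γ - p y) / ε ≤ 0 := div_nonpos_of_nonpos_of_nonneg (by linarith) hε.le
        simp [ramp, this]
    obtain ⟨k, hk⟩ := this
    rw [hk.fderiv_eq]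
    simp

theorem continuous_divg {σ : ℝ × ℝ → ℝ × ℝ} (hσ : ContDiff ℝ 1 σ) : Continuous (divg σ) := by
  have h := hσ.continuous_fderiv one_ne_zero
  unfold divg
  fun_prop

theorem hasCompactSupport_divg {σ : ℝ × ℝ → ℝ × ℝ} (hs : HasCompactSupport σ) :
    HasCompactSupport (divg σ) := by
  refine (hs.fderiv ℝ).mono fun x hx => ?_
  contrapose! hx
  simp [divg, Function.notMem_support.1 hx]

/-- Integration by parts against a Lipschitz function. -/
theorem integral_mul_divg {g : ℝ × ℝ → ℝ} {K : NNReal} (hg : LipschitzWith K g)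
    {σ : ℝ × ℝ → ℝ × ℝ} (hσ : ContDiff ℝ 1 σ) (hs : HasCompactSupport σ) :
    ∫ x, g x * divg σ x = ∫ x, -(fderiv ℝ g x (σ x)) := by
  have hσd : Differentiable ℝ σ := hσ.differentiable one_ne_zero
  have h1 : ContDiff ℝ 1 fun x => (σ x).1 := contDiff_fst.comp hσ
  have h2 : ContDiff ℝ 1 fun x => (σ x).2 := contDiff_snd.comp hσ
  have s1 : HasCompactSupport fun x => (σ x).1 := hs.comp_left (g := Prod.fst) rfl
  have s2 : HasCompactSupport fun x => (σ x).2 := hs.comp_left (g := Prod.snd) rfl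
  obtain ⟨D1, l1⟩ := h1.lipschitzWith_of_hasCompactSupport s1 one_ne_zero
  obtain ⟨D2, l2⟩ := h2.lipschitzWith_of_hasCompactSupport s2 one_ne_zero
  have e1 := hg.integral_lineDeriv_mul_eq (μ := volume) l1 s1 ((1, 0) : ℝ × ℝ)
  have e2 := hg.integral_lineDeriv_mul_eq (μ := volume) l2 s2 ((0, 1) : ℝ × ℝ)
  have hgc := hg.continuous
  have hF := hσ.continuous_fderiv one_ne_zero
  have d1 (x v) : lineDeriv ℝ (fun x => (σ x).1) x v = (fderiv ℝ σ x v).1 := by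
    rw [(h1.differentiable one_ne_zero x).lineDeriv_eq_fderiv, fderiv.fst (hσd x)]; rfl
  have d2 (x v) : lineDeriv ℝ (fun x => (σ x).2) x v = (fderiv ℝ σ x v).2 := by
    rw [(h2.differentiable one_ne_zero x).lineDeriv_eq_fderiv, fderiv.snd (hσd x)]; rfl
  simp only [d1, d2, map_neg, Prod.fst_neg, Prod.snd_neg, neg_mul, integral_neg] at e1 e2
  have cs (v : ℝ × ℝ) : HasCompactSupport fun x => fderiv ℝ σ x v :=
    (hs.fderiv ℝ).comp_left (g := fun L : (ℝ × ℝ) →L[ℝ] (ℝ × ℝ) => L v) rfl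
  have i1 : Integrable fun x => (fderiv ℝ σ x (1, 0)).1 * g x :=
    Continuous.integrable_of_hasCompactSupport (by fun_prop)
      (((cs (1, 0)).comp_left (g := Prod.fst) rfl).mul_right)
  have i2 : Integrable fun x => (fderiv ℝ σ x (0, 1)).2 * g x :=
    Continuous.integrable_of_hasCompactSupport (by fun_prop)
      (((cs (0, 1)).comp_left (g := Prod.snd) rfl).mul_right)
  have j (v : ℝ × ℝ) {f : ℝ × ℝ → ℝ} (hf : Continuous f) (hfs : HasCompactSupport f) :
      Integrable fun x => lineDeriv ℝ g x v * f x := by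
    have hb := (hf.integrable_of_hasCompactSupport (μ := volume) hfs).bdd_mul
      (f := fun x => lineDeriv ℝ g x v) (c := K * ‖v‖)
      (aestronglyMeasurable_lineDeriv hgc volume)
      (Filter.Eventually.of_forall fun x => norm_lineDeriv_le_of_lipschitz ℝ hg)
    exact hb
  have j1 := j (1, 0) h1.continuous s1
  have j2 := j (0, 1) h2.continuous s2
  calc ∫ x, g x * divg σ x
      = ∫ x, ((fderiv ℝ σ x (1, 0)).1 * g x + (fderiv ℝ σ x (0, 1)).2 * g x) :=
        integral_congr_ae (Filter.Eventually.of_forall fun x => by simp only [divg]; ring)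
    _ = -∫ x, (lineDeriv ℝ g x (1, 0) * (σ x).1 + lineDeriv ℝ g x (0, 1) * (σ x).2) := by
        rw [integral_add i1 i2, integral_add j1 j2, e1, e2]; ring
    _ = ∫ x, -(fderiv ℝ g x (σ x)) := by
        rw [← integral_neg]
        refine integral_congr_ae ?_
        filter_upwards [hg.ae_differentiableAt (μ := volume)] with x hx
        rw [hx.lineDeriv_eq_fderiv, hx.lineDeriv_eq_fderiv]
        have : σ x = (σ x).1 • ((1, 0) : ℝ × ℝ) + (σ x).2 • ((0, 1) : ℝ × ℝ) := by
          ext <;> simp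
        conv_rhs => rw [this, map_add, map_smul, map_smul]
        simp only [smul_eq_mul]; ring

theorem volume_shell_le (hp : Continuous p) (hc : 0 < c) (hcp : ∀ x, c * ‖x‖ ≤ p x)
    (hAo : IsOpen A) (hcone : ∀ t : ℝ, 0 < t → t • A = A) {γ ε : ℝ} (hε : 0 < ε) (hεγ : ε < γ) :
    volume.real ({x | γ - ε ≤ p x ∧ p x ≤ γ} ∩ A) ≤
      ((γ + ε ^ 2) ^ 2 - (γ - ε) ^ 2) * volume.real ({x | p x < 1} ∩ A) := by
  have hfin (r : ℝ) : volume ({x | p x < r} ∩ A) ≠ ⊤ :=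
    ((measure_mono inter_subset_left).trans_lt (measure_sublevel_lt_top hc hcp r)).ne
  have hsub : {x | p x < γ - ε} ∩ A ⊆ {x | p x < γ + ε ^ 2} ∩ A := by
    rintro x ⟨hx, hxA⟩
    exact ⟨lt_trans (b := γ - ε) hx (by nlinarith), hxA⟩
  have hm : MeasurableSet ({x | p x < γ - ε} ∩ A) :=
    ((isOpen_sublevel hp _).inter hAo).measurableSet
  rw [sub_mul, ← volume_sector hcone (by positivity [hε.trans hεγ] : 0 < γ + ε ^ 2),
    ← volume_sector hcone (sub_pos.2 hεγ), ← measureReal_sdiff hsub hm (hfin _)]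
  refine measureReal_mono ?_ (measure_ne_top_of_subset sdiff_subset (hfin _))
  rintro x ⟨⟨h1, h2⟩, hxA⟩
  refine ⟨⟨lt_of_le_of_lt (b := γ) h2 (by nlinarith), hxA⟩, fun h => ?_⟩
  exact absurd h.1 (not_lt.2 h1)

/-- The flux of an admissible field out of the part of the sublevel set `{p < γ}` in the cone,
smeared over a shell of width `ε`, is at most the area of the shell divided by `ε`. -/
theorem integral_ramp_mul_divg_le (hC : ∀ x, p x ≤ C * ‖x‖) (hc : 0 < c)
    (hcp : ∀ x, c * ‖x‖ ≤ p x) (hAo : IsOpen A) (hcone : ∀ t : ℝ, 0 < t → t • A = A)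
    {σ : ℝ × ℝ → ℝ × ℝ} (hσ : ContDiff ℝ 1 σ) (hs : HasCompactSupport σ) (hsA : tsupport σ ⊆ A)
    (hN : ∀ x, p (σ x) ≤ 1) {γ ε : ℝ} (hε : 0 < ε) (hεγ : ε < γ) :
    ∫ x, ramp p γ ε x * divg σ x ≤
      (2 * γ * ε + ε ^ 3 + 2 * γ - ε) * volume.real ({x | p x < 1} ∩ A) := by
  have hp : Continuous p := (lipschitz_of_bound hC).continuous
  obtain ⟨K, hK⟩ := ramp_lipschitz hC (γ := γ) hε
  set S := {x | γ - ε ≤ p x ∧ p x ≤ γ} ∩ A with hS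
  have hSm : MeasurableSet S :=
    (((isClosed_le continuous_const hp).inter (isClosed_le hp continuous_const)).measurableSet).inter
      hAo.measurableSet
  have hSfin : volume S ≠ ⊤ := by
    refine measure_ne_top_of_subset ?_ (measure_sublevel_lt_top hc hcp (γ + 1)).ne
    rintro x ⟨⟨_, h⟩, _⟩
    exact lt_of_le_of_lt (b := γ) h (by linarith)
  rw [integral_mul_divg hK hσ hs]
  have hle : ∫ x, -(fderiv ℝ (ramp p γ ε) x (σ x)) ≤ ∫ x, S.indicator (fun _ => 1 / ε) x := by
    have hnn : 0 ≤ ∫ x, S.indicator (fun _ => 1 / ε) x :=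
      integral_nonneg fun x => indicator_nonneg (fun _ _ => by positivity) x
    by_cases hi : Integrable fun x => -(fderiv ℝ (ramp p γ ε) x (σ x))
    · refine integral_mono_ae hi ((integrable_indicator_iff hSm).2 (integrableOn_const hSfin)) ?_
      filter_upwards [hK.ae_differentiableAt (μ := volume)] with x hx
      by_cases hxA : x ∈ A
      · refine (neg_fderiv_ramp_le hp hε hx (hN x)).trans (le_of_eq ?_)
        by_cases hxS : γ - ε ≤ p x ∧ p x ≤ γ
        · rw [indicator_of_mem (by exact hxS), indicator_of_mem (by exact ⟨hxS, hxA⟩)]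
        · rw [indicator_of_notMem (by exact hxS), indicator_of_notMem (fun h => hxS h.1)]
      · have : σ x = 0 := image_eq_zero_of_notMem_tsupport fun h => hxA (hsA h)
        rw [this, map_zero, neg_zero]
        exact indicator_nonneg (fun _ _ => by positivity) x
    · rwa [integral_undef hi]
  refine hle.trans ?_
  rw [integral_indicator hSm, setIntegral_const, smul_eq_mul, mul_one_div, div_le_iff₀ hε]
  refine (volume_shell_le hp hc hcp hAo hcone hε hεγ).trans (le_of_eq ?_)
  ring

/-- The upper bound: the limit `ε → 0` of the ramp estimate. -/
theorem setIntegral_divg_le (hC : ∀ x, p x ≤ C * ‖x‖) (hc : 0 < c)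
    (hcp : ∀ x, c * ‖x‖ ≤ p x) (hAo : IsOpen A) (hcone : ∀ t : ℝ, 0 < t → t • A = A)
    {σ : ℝ × ℝ → ℝ × ℝ} (hσ : ContDiff ℝ 1 σ) (hs : HasCompactSupport σ) (hsA : tsupport σ ⊆ A)
    (hN : ∀ x, p (σ x) ≤ 1) {γ : ℝ} (hγ : 0 < γ) :
    ∫ x in {x | p x < γ}, divg σ x ≤ 2 * γ * volume.real ({x | p x < 1} ∩ A) := by
  have hp : Continuous p := (lipschitz_of_bound hC).continuous
  have hpos : ∀ᶠ ε in nhdsWithin (0 : ℝ) (Ioi 0), 0 < ε := self_mem_nhdsWithin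
  have hlt {b : ℝ} (hb : 0 < b) : ∀ᶠ ε in nhdsWithin (0 : ℝ) (Ioi 0), ε < b :=
    mem_nhdsWithin_of_mem_nhds (Iio_mem_nhds hb)
  have hl : Filter.Tendsto (fun ε => ∫ x, ramp p γ ε x * divg σ x) (nhdsWithin 0 (Ioi 0))
      (nhds (∫ x in {x | p x < γ}, divg σ x)) := by
    rw [← integral_indicator (isOpen_sublevel hp γ).measurableSet]
    refine tendsto_integral_filter_of_dominated_convergence (fun x => ‖divg σ x‖) ?_ ?_
      ((continuous_divg hσ).integrable_of_hasCompactSupport (hasCompactSupport_divg hs)).norm ?_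
    · filter_upwards [hpos] with ε hε
      obtain ⟨K, hK⟩ := ramp_lipschitz hC (γ := γ) hε
      exact (hK.continuous.mul (continuous_divg hσ)).aestronglyMeasurable
    · refine Filter.Eventually.of_forall fun ε => Filter.Eventually.of_forall fun x => ?_
      rw [norm_mul, Real.norm_eq_abs (ramp p γ ε x), abs_of_nonneg (ramp_mem γ ε x).1]
      exact mul_le_of_le_one_left (norm_nonneg _) (ramp_mem γ ε x).2
    · refine Filter.Eventually.of_forall fun x => tendsto_const_nhds.congr' ?_
      by_cases hx : p x < γ
      · filter_upwards [hpos, hlt (sub_pos.2 hx)] with ε hε hε'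
        have : 1 ≤ (γ - p x) / ε := by rw [le_div_iff₀ hε]; linarith
        rw [indicator_of_mem (by exact hx)]
        simp [ramp, this]
      · filter_upwards [hpos] with ε hε
        have : (γ - p x) / ε ≤ 0 := div_nonpos_of_nonpos_of_nonneg (by linarith) hε.le
        rw [indicator_of_notMem (by exact hx)]
        simp [ramp, this]
  have hr : Filter.Tendsto
      (fun ε => (2 * γ * ε + ε ^ 3 + 2 * γ - ε) * volume.real ({x | p x < 1} ∩ A))
      (nhdsWithin 0 (Ioi 0)) (nhds (2 * γ * volume.real ({x | p x < 1} ∩ A))) := by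
    have : Continuous fun ε : ℝ =>
      (2 * γ * ε + ε ^ 3 + 2 * γ - ε) * volume.real ({x | p x < 1} ∩ A) := by fun_prop
    refine Filter.Tendsto.mono_left ?_ nhdsWithin_le_nhds
    convert this.tendsto 0 using 2
    ring
  refine le_of_tendsto_of_tendsto hl hr ?_
  filter_upwards [hpos, hlt hγ] with ε h1 h2
  exact integral_ramp_mul_divg_le hC hc hcp hAo hcone hσ hs hsA hN h1 h2

/-! ### The lower bound: truncated radial fields -/

theorem exists_cutoff {s t : Set (ℝ × ℝ)} (hs : IsClosed s) (ht : IsClosed t)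
    (hd : Disjoint s t) : ∃ f : ℝ × ℝ → ℝ, ContDiff ℝ 1 f ∧ (∀ x ∈ s, f x = 0) ∧
      (∀ x ∈ t, f x = 1) ∧ ∀ x, 0 ≤ f x ∧ f x ≤ 1 := by
  obtain ⟨f, h0, h1, h⟩ := exists_contMDiffMap_zero_one_of_isClosed
    (n := 1) (modelWithCornersSelf ℝ (ℝ × ℝ)) hs ht hd
  exact ⟨f, f.contMDiff.contDiff, h0, h1, h⟩

theorem divg_congr {σ τ : ℝ × ℝ → ℝ × ℝ} {x : ℝ × ℝ} (h : σ =ᶠ[nhds x] τ) :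
    divg σ x = divg τ x := by
  simp only [divg, h.fderiv_eq]

theorem divg_const_smul (k : ℝ) {σ : ℝ × ℝ → ℝ × ℝ} (hσ : Differentiable ℝ σ) (x : ℝ × ℝ) :
    divg (fun x => k • σ x) x = k * divg σ x := by
  unfold divg
  rw [fderiv_fun_const_smul (hσ x)]
  simp only [smul_apply, Prod.smul_fst, Prod.smul_snd, smul_eq_mul]
  ring

theorem divg_radial {η : ℝ × ℝ → ℝ} (hη : Differentiable ℝ η) (t : ℝ) (x : ℝ × ℝ) :
    divg (fun x => η (t • x) • x) x = 2 * η (t • x) + t * fderiv ℝ η (t • x) x := by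
  have h1 : HasFDerivAt (fun x : ℝ × ℝ => η (t • x))
      ((fderiv ℝ η (t • x)).comp (t • ContinuousLinearMap.id ℝ (ℝ × ℝ))) x :=
    (hη (t • x)).hasFDerivAt.comp x ((hasFDerivAt_id x).const_smul t)
  have h2 := (h1.smul (hasFDerivAt_id x)).fderiv
  change fderiv ℝ (fun x => η (t • x) • x) x = _ at h2
  unfold divg
  rw [h2]
  have : x = x.1 • ((1, 0) : ℝ × ℝ) + x.2 • ((0, 1) : ℝ × ℝ) := by ext <;> simp
  have h3 : fderiv ℝ η (t • x) x =
      x.1 * fderiv ℝ η (t • x) (1, 0) + x.2 * fderiv ℝ η (t • x) (0, 1) := by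
    conv_lhs => rw [this, map_add, map_smul, map_smul, ← this]
    rfl
  rw [h3]
  simp
  ring

/-- The vector fields competing in the relative perimeter. -/
def Admissible (p : Seminorm ℝ (ℝ × ℝ)) (A : Set (ℝ × ℝ)) (σ : ℝ × ℝ → ℝ × ℝ) : Prop :=
  ContDiff ℝ 1 σ ∧ HasCompactSupport σ ∧ tsupport σ ⊆ A ∧ ∀ x, p (σ x) ≤ 1

theorem mem_of_smul_mem (hcone : ∀ t : ℝ, 0 < t → t • A = A) {t : ℝ} (ht : 0 < t) {x : ℝ × ℝ}
    (h : t • x ∈ A) : x ∈ A := by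
  rw [← hcone t ht] at h
  exact (smul_mem_smul_set_iff₀ ht.ne' A x).1 h

/-- The radial field `x ↦ η (t x) x` is, up to the factor `1 / γ`, nearly admissible on `{p < γ}`:
multiplying it by a cutoff between `{p ≤ γ}` and `{p < γ'}` and dividing by `γ' > γ` makes it so. -/
theorem flux_radial_le (hp : Continuous p) (hc : 0 < c) (hcp : ∀ x, c * ‖x‖ ≤ p x)
    (hcone : ∀ t : ℝ, 0 < t → t • A = A) {γ M : ℝ} (hγ : 0 < γ)
    (hM : ∀ σ, Admissible p A σ → ∫ x in {x | p x < γ}, divg σ x ≤ M)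
    {η : ℝ × ℝ → ℝ} (hη : ContDiff ℝ 1 η) (hηA : tsupport η ⊆ A)
    (hη01 : ∀ x, 0 ≤ η x ∧ η x ≤ 1) {t : ℝ} (ht : 0 < t) :
    ∫ x in {x | p x < γ}, divg (fun x => η (t • x) • x) x ≤ γ * M := by
  have key : ∀ γ' : ℝ, γ < γ' →
      ∫ x in {x | p x < γ}, divg (fun x => η (t • x) • x) x ≤ γ' * M := by
    intro γ' hγ'
    have hγ'0 : 0 < γ' := hγ.trans hγ'
    obtain ⟨χ, hχ, hχ0, hχ1, hχ01⟩ := exists_cutoff (s := {x | γ' ≤ p x}) (t := {x | p x ≤ γ})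
      (isClosed_le continuous_const hp) (isClosed_le hp continuous_const)
      (Set.disjoint_left.2 fun x (h1 : γ' ≤ p x) (h2 : p x ≤ γ) => by linarith)
    have hrad : ContDiff ℝ 1 fun x => η (t • x) • x := by fun_prop
    have hadm : Admissible p A fun x => χ x • γ'⁻¹ • η (t • x) • x := by
      refine ⟨by fun_prop, ?_, ?_, fun x => ?_⟩
      · refine HasCompactSupport.intro (isCompact_closedBall 0 (γ' / c)) fun x hx => ?_
        have : γ' ≤ p x := by
          by_contra! h
          exact hx (Metric.ball_subset_closedBall (sublevel_subset_ball hc hcp γ' h))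
        simp [hχ0 x this]
      · intro x hx
        refine mem_of_smul_mem hcone ht (hηA ?_)
        have hcl : IsClosed ((fun x : ℝ × ℝ => t • x) ⁻¹' tsupport η) :=
          (isClosed_tsupport η).preimage (continuous_const_smul t)
        refine closure_minimal (fun y hy => ?_) hcl hx
        refine subset_tsupport η (Function.mem_support.2 fun h0 => hy ?_)
        simp [h0]
      · rcases lt_or_ge (p x) γ' with h | h
        · rw [map_smul_eq_mul, map_smul_eq_mul, map_smul_eq_mul, Real.norm_eq_abs,
            Real.norm_eq_abs, Real.norm_eq_abs, abs_of_nonneg (hχ01 x).1,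
            abs_of_nonneg (hη01 _).1, abs_of_pos (inv_pos.2 hγ'0)]
          have h1 : γ'⁻¹ * (η (t • x) * p x) ≤ 1 := by
            rw [inv_mul_le_iff₀ hγ'0, mul_one]
            exact (mul_le_of_le_one_left (apply_nonneg p x) (hη01 _).2).trans h.le
          have h0 : 0 ≤ γ'⁻¹ * (η (t • x) * p x) :=
            mul_nonneg (inv_pos.2 hγ'0).le (mul_nonneg (hη01 _).1 (apply_nonneg p x))
          exact (mul_le_of_le_one_left h0 (hχ01 x).2).trans h1
        · simp [hχ0 x h]
    have heq : ∫ x in {x | p x < γ}, divg (fun x => χ x • γ'⁻¹ • η (t • x) • x) x =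
        γ'⁻¹ * ∫ x in {x | p x < γ}, divg (fun x => η (t • x) • x) x := by
      rw [← integral_const_mul]
      refine setIntegral_congr_fun (isOpen_sublevel hp γ).measurableSet fun x hx => ?_
      change divg _ x = γ'⁻¹ * divg _ x
      rw [← divg_const_smul _ (hrad.differentiable one_ne_zero)]
      refine divg_congr ?_
      filter_upwards [(isOpen_sublevel hp γ).mem_nhds hx] with y (hy : p y < γ)
      rw [hχ1 y hy.le, one_smul]
    have := hM _ hadm
    rwa [heq, inv_mul_le_iff₀ hγ'0] at this
  have hl : Filter.Tendsto (fun γ' : ℝ => γ' * M) (nhdsWithin γ (Ioi γ)) (nhds (γ * M)) :=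
    Filter.Tendsto.mono_left ((continuous_id.mul continuous_const).tendsto γ) nhdsWithin_le_nhds
  exact ge_of_tendsto hl (Filter.mem_of_superset self_mem_nhdsWithin fun γ' h => key γ' h)

/-- Integrating the flux bounds for the radial fields `x ↦ η (t x) x` over `t ∈ [0, 1]`: the
derivative of `t ^ 2 * ∫ η (t x)` in `t` is `t` times the flux of that field, and the value at
`t = 1` is `∫ η`. -/
theorem setIntegral_cutoff_le (hp : Continuous p) (hc : 0 < c) (hcp : ∀ x, c * ‖x‖ ≤ p x)
    (hcone : ∀ t : ℝ, 0 < t → t • A = A) {γ M : ℝ} (hγ : 0 < γ)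
    (hM : ∀ σ, Admissible p A σ → ∫ x in {x | p x < γ}, divg σ x ≤ M)
    {η : ℝ × ℝ → ℝ} (hη : ContDiff ℝ 1 η) (hηs : HasCompactSupport η) (hηA : tsupport η ⊆ A)
    (hη01 : ∀ x, 0 ≤ η x ∧ η x ≤ 1) :
    ∫ x in {x | p x < γ}, η x ≤ γ * M / 2 := by
  have hW := measure_sublevel_lt_top hc hcp γ
  have hWm : MeasurableSet {x | p x < γ} := (isOpen_sublevel hp γ).measurableSet
  have : IsFiniteMeasure (volume.restrict {x | p x < γ}) := ⟨by simpa using hW⟩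
  have hη' : Continuous (fderiv ℝ η) := hη.continuous_fderiv one_ne_zero
  have hηc : Continuous η := hη.continuous
  have hηd : Differentiable ℝ η := hη.differentiable one_ne_zero
  obtain ⟨B, hB⟩ := (hηs.fderiv ℝ).exists_bound_of_continuous hη'
  have hint (t : ℝ) : Integrable (fun x => η (t • x)) (volume.restrict {x | p x < γ}) := by
    refine Integrable.of_bound (by fun_prop) 1 (Filter.Eventually.of_forall fun x => ?_)
    rw [Real.norm_eq_abs, abs_of_nonneg (hη01 _).1]
    exact (hη01 _).2
  have hG (t : ℝ) : Integrable (fun x => fderiv ℝ η (t • x) x) (volume.restrict {x | p x < γ}) ∧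
      HasDerivAt (fun t : ℝ => ∫ x in {x | p x < γ}, η (t • x))
        (∫ x in {x | p x < γ}, fderiv ℝ η (t • x) x) t := by
    refine hasDerivAt_integral_of_dominated_loc_of_deriv_le
      (F := fun (t : ℝ) x => η (t • x)) (F' := fun (t : ℝ) x => fderiv ℝ η (t • x) x)
      (bound := fun _ => B * (γ / c))
      Filter.univ_mem (Filter.Eventually.of_forall fun s => (hint s).aestronglyMeasurable) (hint t)
      (by fun_prop) ?_ (integrable_const _) ?_
    · refine (ae_restrict_iff' hWm).2 (Filter.Eventually.of_forall fun x hx s _ => ?_)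
      refine (ContinuousLinearMap.le_opNorm _ _).trans ?_
      have h1 := hB (s • x)
      have h2 := (mem_ball_zero_iff.1 (sublevel_subset_ball hc hcp γ hx)).le
      exact mul_le_mul h1 h2 (norm_nonneg _) ((norm_nonneg _).trans h1)
    · refine Filter.Eventually.of_forall fun x s _ => ?_
      have h := (hηd (s • x)).hasFDerivAt.comp_hasDerivAt s ((hasDerivAt_id s).smul_const x)
      rw [one_smul] at h
      exact h
  set G : ℝ → ℝ := fun t => ∫ x in {x | p x < γ}, η (t • x) with hGdef
  have hΨ (t : ℝ) : HasDerivAt (fun t : ℝ => t ^ 2 * (γ * M / 2) - t ^ 2 * G t)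
      (2 * t * (γ * M / 2) - (2 * t * G t + t ^ 2 * ∫ x in {x | p x < γ}, fderiv ℝ η (t • x) x))
      t := by
    have h2 : HasDerivAt (fun t : ℝ => t ^ 2) (2 * t) t := by simpa using hasDerivAt_pow 2 t
    exact (h2.mul_const _).sub (h2.mul (hG t).2)
  have hmono : MonotoneOn (fun t : ℝ => t ^ 2 * (γ * M / 2) - t ^ 2 * G t) (Ici 0) := by
    refine monotoneOn_of_deriv_nonneg (convex_Ici 0)
      (fun t _ => (hΨ t).continuousAt.continuousWithinAt)
      (fun t _ => (hΨ t).differentiableAt.differentiableWithinAt) fun t ht => ?_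
    rw [interior_Ici] at ht
    rw [(hΨ t).deriv]
    have hfl := flux_radial_le hp hc hcp hcone hγ hM hη hηA hη01 ht
    simp only [divg_radial hηd] at hfl
    rw [integral_add ((hint t).const_mul 2) ((hG t).1.const_mul t), integral_const_mul,
      integral_const_mul] at hfl
    have := mul_le_mul_of_nonneg_left hfl (le_of_lt ht)
    simp only [hGdef]
    linarith
  have h01 := hmono (mem_Ici.2 le_rfl) (mem_Ici.2 zero_le_one) zero_le_one
  simp only [hGdef, one_smul] at h01
  linarith

/-- The lower bound: any bound `M` on the competitors dominates `2 γ |{p < 1} ∩ A|`, by inner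
regularity of the area and cutoffs of compact subsets of the sector. -/
theorem area_le (hp : Continuous p) (hc : 0 < c) (hcp : ∀ x, c * ‖x‖ ≤ p x) (hAo : IsOpen A)
    (hcone : ∀ t : ℝ, 0 < t → t • A = A) {γ M : ℝ} (hγ : 0 < γ)
    (hM : ∀ σ, Admissible p A σ → ∫ x in {x | p x < γ}, divg σ x ≤ M) :
    2 * γ * volume.real ({x | p x < 1} ∩ A) ≤ M := by
  have hM0 : 0 ≤ M := by
    have h0 : Admissible p A fun _ => 0 :=
      ⟨contDiff_const, HasCompactSupport.zero, by simp [tsupport], by simp⟩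
    simpa [divg] using hM _ h0
  have hW := measure_sublevel_lt_top hc hcp γ
  have hUo : IsOpen ({x | p x < γ} ∩ A) := (isOpen_sublevel hp γ).inter hAo
  have hle : volume ({x | p x < γ} ∩ A) ≤ ENNReal.ofReal (γ * M / 2) := by
    rw [hUo.measure_eq_iSup_isCompact]
    refine iSup_le fun K => iSup_le fun hKU => iSup_le fun hK => ?_
    obtain ⟨L, hL, hKL, hLA⟩ := exists_compact_between hK hAo (hKU.trans inter_subset_right)
    obtain ⟨η, hη, hη0, hη1, hη01⟩ := exists_cutoff (isOpen_interior (s := L)).isClosed_compl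
      hK.isClosed (disjoint_compl_left_iff_subset.2 hKL)
    have hts : tsupport η ⊆ L := by
      refine closure_minimal (fun x hx => ?_) hL.isClosed
      by_contra hxL
      exact hx (hη0 x fun h => hxL (interior_subset h))
    have hηs : HasCompactSupport η := hL.of_isClosed_subset (isClosed_tsupport η) hts
    have hI := setIntegral_cutoff_le hp hc hcp hcone hγ hM hη hηs (hts.trans hLA) hη01
    rw [← ENNReal.ofReal_toReal hK.measure_lt_top.ne]
    refine ENNReal.ofReal_le_ofReal (le_trans ?_ hI)
    have hKW : K ⊆ {x | p x < γ} := hKU.trans inter_subset_left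
    have hηi := hη.continuous.integrable_of_hasCompactSupport (μ := volume) hηs
    calc (volume K).toReal = ∫ x in K, η x := by
          rw [setIntegral_congr_fun hK.measurableSet (g := fun _ => (1 : ℝ)) fun x hx => hη1 x hx]
          simp [measureReal_def]
      _ ≤ ∫ x in {x | p x < γ}, η x :=
          setIntegral_mono_set hηi.integrableOn
            (Filter.Eventually.of_forall fun x => (hη01 x).1) hKW.eventuallyLE
  have hreal : volume.real ({x | p x < γ} ∩ A) ≤ γ * M / 2 :=
    ENNReal.toReal_le_of_le_ofReal (by positivity) hle
  rw [volume_sector hcone hγ] at hreal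
  have : γ * (2 * γ * volume.real ({x | p x < 1} ∩ A)) ≤ γ * M := by linarith
  exact le_of_mul_le_mul_left this hγ

/-- The perimeter formula for the balls `{p < γ}` of a norm `p` on the plane. -/
theorem perim_sublevel (hC : ∀ x, p x ≤ C * ‖x‖) (hc : 0 < c) (hcp : ∀ x, c * ‖x‖ ≤ p x)
    (hAo : IsOpen A) (hcone : ∀ t : ℝ, 0 < t → t • A = A) {γ : ℝ} (hγ : 0 < γ) :
    perim p {x | p x < γ} A = 2 * γ * volume.real ({x | p x < 1} ∩ A) := by
  have hub : ∀ r ∈ {r : ℝ | ∃ σ : ℝ × ℝ → ℝ × ℝ, ContDiff ℝ 1 σ ∧ HasCompactSupport σ ∧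
      tsupport σ ⊆ A ∧ (∀ x, p (σ x) ≤ 1) ∧ r = ∫ x in {x | p x < γ}, divg σ x},
      r ≤ 2 * γ * volume.real ({x | p x < 1} ∩ A) := by
    rintro r ⟨σ, h1, h2, h3, h4, rfl⟩
    exact setIntegral_divg_le hC hc hcp hAo hcone h1 h2 h3 h4 hγ
  refine le_antisymm (csSup_le ?_ hub) ?_
  · exact ⟨_, fun _ => 0, contDiff_const, HasCompactSupport.zero, by simp [tsupport], by simp, rfl⟩
  · refine area_le (lipschitz_of_bound hC).continuous hc hcp hAo hcone hγ ?_
    rintro σ ⟨h1, h2, h3, h4⟩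
    exact le_csSup ⟨_, hub⟩ ⟨σ, h1, h2, h3, h4, rfl⟩

end Cone

/-- the anisotropic perimeter of a rescaled Wulff shape relative to an
open convex cone `A` with vertex at the origin: `P_H(γW; A) = 2γ|W ∩ A|`. -/
theorem stmt16 (H : ℝ × ℝ → ℝ) (α β : ℝ) (hH : IsAnisoNorm H α β)
    (A : Set (ℝ × ℝ)) (hA : A.Nonempty) (hAo : IsOpen A) (hAconv : Convex ℝ A)
    (hcone : ∀ t : ℝ, 0 < t → t • A = A) :
    ∀ γ : ℝ, 0 < γ →
      perH H (γ • wulff H) A = 2 * γ * (volume (wulff H ∩ A)).toReal := by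
  intro γ hγ
  have hβ : 0 < β := hH.alpha_pos.trans_le hH.alpha_le_beta
  have h := perim_sublevel (p := polarSeminorm hH) (polar_upper hH) (one_div_pos.2 hβ)
    (polar_lower hH) hAo hcone hγ
  have hw : γ • wulff H = {x | polarSeminorm hH x < γ} := by
    have := smul_sublevel (p := polarSeminorm hH) hγ 1
    rwa [mul_one] at this
  rw [perH, hw]
  exact h
end
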